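/- (Long–Servedio negative result for convex potential functions.) Fix any noise rate η ∈ (0, 1/2) and any convex potential function φ. There exist a probability distribution D supported on three points of the closed unit disc in ℝ² (with labels in {-1,1}) and a margin parameter γ > 0 such that: (a) D is linearly separable with margin γ; but (b) every weight vector v ∈ ℝ² that minimizes the noisy risk E_{(x,y)~D̄_η}[φ(y (v·x))] over all of ℝ² satisfies Pr_{(x,y)~D}[y ≠ sign(v·x)] = 1/2. -/

import Mathlib

/-!
Write `ℓ(z) = (1 - η) φ(z) + η φ(-z)` for the noisy loss of a classifier with margin `z`. It is
convex with `ℓ'(0) < 0`, and `ℓ'` is bounded below by a positive constant near `+∞`, because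
`φ'(z) → 0` while `-φ'(-z) ≥ -φ'(0) > 0`.

The distribution puts mass `1/4` on `(1, 0)`, mass `1/2` on `(γ, -γ)` and mass `1/4` on `(γ, 5γ)`,
all with label `1`; the vector `(1, 0)` separates it with margin `γ`. Let `v` minimize the noisy
risk and put `s = γ (v₀ - v₁)`, `t = γ (v₀ + 5 v₁)`. Vanishing of the gradient amounts to
`ℓ'(t) = (2/5) ℓ'(s)` and `ℓ'(v₀) = -(12/5) γ ℓ'(s)`. If `s > 0`, then `ℓ'(t) ≥ (2/5) ℓ'(0)`, which
keeps `t` above a positive constant independent of `γ`. Since `6 γ v₀ = 5 s + t`, the coordinate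
`v₀` is then of order at least `1/γ`, so `ℓ'(v₀)` is bounded below by a positive constant,
whereas `ℓ'(v₀) ≤ -(12/5) γ ℓ'(0)` is small with `γ`. So for small `γ` we have `s ≤ 0`, i.e. the
point of mass `1/2` is misclassified; then `ℓ'(v₀) > 0` forces `v₀ > 0`, and `v₁ ≥ v₀` gives
`t > 0`, so that the other two points are classified correctly (`minimizer_signs`).
-/

open MeasureTheory Filter
open scoped RealInnerProductSpace ENNReal

/-- A convex potential function in the sense of Long and Servedio:
`φ` is `C¹`, convex, nonincreasing, has `φ'(0) < 0`, and `φ(x) → 0` as `x → ∞`. -/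
structure IsConvexPotential (φ : ℝ → ℝ) : Prop where
  differentiable : Differentiable ℝ φ
  continuous_deriv : Continuous (deriv φ)
  convexOn : ConvexOn ℝ Set.univ φ
  antitone : Antitone φ
  deriv_zero_neg : deriv φ 0 < 0
  tendsto_zero : Filter.Tendsto φ Filter.atTop (nhds 0)

/-- The `φ`-risk of the linear classifier `v` under the `η`-RCN corrupted version of `D`:
`E_{(x,y)~D̄_η}[φ(y (v·x))] = E_{(x,y)~D}[(1-η) φ(y (v·x)) + η φ(-y (v·x))]`.
Since a convex potential function is nonnegative, we take the (extended-real-valued)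
lower integral. -/
noncomputable def noisyRisk {d : ℕ} (φ : ℝ → ℝ) (η : ℝ)
    (D : Measure (EuclideanSpace ℝ (Fin d) × ℝ)) (v : EuclideanSpace ℝ (Fin d)) : ℝ≥0∞ :=
  ∫⁻ p, ENNReal.ofReal ((1 - η) * φ (p.2 * ⟪v, p.1⟫) + η * φ (-p.2 * ⟪v, p.1⟫)) ∂D

/-- The sign function: `sign t = 1` if `t > 0` and `-1` otherwise. -/
noncomputable def signR (t : ℝ) : ℝ := if 0 < t then 1 else -1

/-- The derivative of the noisy loss `z ↦ (1 - η) φ(z) + η φ(-z)`. -/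
noncomputable def noisyDeriv (φ : ℝ → ℝ) (η z : ℝ) : ℝ :=
  (1 - η) * deriv φ z - η * deriv φ (-z)

theorem hasDerivAt_noisyLoss {φ : ℝ → ℝ} (hφ : IsConvexPotential φ) (η z : ℝ) :
    HasDerivAt (fun z => (1 - η) * φ z + η * φ (-z)) (noisyDeriv φ η z) z := by
  have h1 := (hφ.differentiable z).hasDerivAt.const_mul (1 - η)
  have h2 := ((hφ.differentiable (-z)).hasDerivAt.comp z (hasDerivAt_neg z)).const_mul η
  exact (h1.add h2).congr_deriv (by unfold noisyDeriv; ring)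

theorem IsConvexPotential.nonneg {φ : ℝ → ℝ} (hφ : IsConvexPotential φ) (x : ℝ) : 0 ≤ φ x :=
  hφ.antitone.le_of_tendsto hφ.tendsto_zero x

theorem IsConvexPotential.monotone_deriv {φ : ℝ → ℝ} (hφ : IsConvexPotential φ) :
    Monotone (deriv φ) := by
  have h := hφ.convexOn.monotoneOn_deriv (fun x _ => hφ.differentiable x)
  exact monotoneOn_univ.mp h

theorem monotone_noisyDeriv {φ : ℝ → ℝ} (hφ : IsConvexPotential φ) {η : ℝ}
    (hη : η ∈ Set.Ioo (0 : ℝ) (1/2)) : Monotone (noisyDeriv φ η) := by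
  intro x y hxy
  have h1 := hφ.monotone_deriv hxy
  have h2 := hφ.monotone_deriv (neg_le_neg hxy)
  have h3 : 0 ≤ 1 - η := by linarith [hη.2]
  unfold noisyDeriv
  linarith [mul_le_mul_of_nonneg_left h1 h3, mul_le_mul_of_nonneg_left h2 hη.1.le]

/-- The derivative of the noisy loss stays above a positive constant near `+∞`. -/
theorem exists_noisyDeriv_ge {φ : ℝ → ℝ} (hφ : IsConvexPotential φ) {η : ℝ}
    (hη : η ∈ Set.Ioo (0 : ℝ) (1/2)) :
    ∃ R : ℝ, 1 ≤ R ∧ ∀ z, R ≤ z → -(η * deriv φ 0) / 2 ≤ noisyDeriv φ η z := by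
  have hpos : 0 < -(η * deriv φ 0) / 2 := by
    nlinarith [mul_pos hη.1 (neg_pos.2 hφ.deriv_zero_neg)]
  obtain ⟨N, hN⟩ := eventually_atTop.1 (hφ.tendsto_zero.eventually_lt_const hpos)
  refine ⟨max 1 (N + 1), le_max_left _ _, fun z hz => ?_⟩
  have hz1 : 1 ≤ z := (le_max_left _ _).trans hz
  have hzN : N ≤ z - 1 := by linarith [(le_max_right 1 (N + 1)).trans hz]
  -- By convexity `φ' z` is at least the slope of `φ` on `[z - 1, z]`.
  have hs : slope φ (z - 1) z ≤ deriv φ z :=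
    hφ.convexOn.slope_le_deriv (Set.mem_univ _) (Set.mem_univ _) (by linarith)
      (hφ.differentiable z)
  rw [slope_def_field] at hs
  have hs' : φ z - φ (z - 1) ≤ deriv φ z := by simpa using hs
  have h1 := hN _ hzN
  have h2 := hφ.nonneg z
  have h3 := mul_le_mul_of_nonneg_left
    (hφ.monotone_deriv (show -z ≤ 0 by linarith)) hη.1.le
  unfold noisyDeriv
  nlinarith [hη.1, hη.2]

/-- The derivative of the noisy loss stays below half of its (negative) value at `0` up to some
positive point. -/
theorem exists_noisyDeriv_lt {φ : ℝ → ℝ} (hφ : IsConvexPotential φ) {η : ℝ}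
    (hη : η ∈ Set.Ioo (0 : ℝ) (1/2)) :
    ∃ t₀ : ℝ, 0 < t₀ ∧ ∀ z, z < t₀ → noisyDeriv φ η z < (1 - 2 * η) * deriv φ 0 / 2 := by
  have hc : Continuous (noisyDeriv φ η) := by
    have := hφ.continuous_deriv
    unfold noisyDeriv
    fun_prop
  have h0 : noisyDeriv φ η 0 < (1 - 2 * η) * deriv φ 0 / 2 := by
    have : 0 < (1 - 2 * η) * -deriv φ 0 :=
      mul_pos (by linarith [hη.2]) (neg_pos.2 hφ.deriv_zero_neg)
    simp only [noisyDeriv, neg_zero]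
    linarith
  obtain ⟨ε, hε, h⟩ := Metric.eventually_nhds_iff.1 (hc.continuousAt.eventually_lt_const h0)
  refine ⟨ε / 2, by positivity, fun z hz => ?_⟩
  refine (monotone_noisyDeriv hφ hη hz.le).trans_lt (h ?_)
  rw [Real.dist_eq, sub_zero, abs_of_pos (by positivity)]
  linarith

/-- Four times the noisy risk of `v = (a, b)` under the distribution with mass `1/4` on `(1, 0)`,
`1/2` on `(γ, -γ)` and `1/4` on `(γ, 5γ)`, all labelled `1`. -/
noncomputable def risk (φ : ℝ → ℝ) (η γ a b : ℝ) : ℝ :=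
  ((1 - η) * φ a + η * φ (-a))
    + 2 * ((1 - η) * φ (γ * (a - b)) + η * φ (-(γ * (a - b))))
    + ((1 - η) * φ (γ * (a + 5 * b)) + η * φ (-(γ * (a + 5 * b))))

/-- The sign pattern of a minimizer for small `γ`: the point of mass `1/2` has nonpositive margin,
the other two have positive margin. -/
theorem minimizer_signs {φ : ℝ → ℝ} (hφ : IsConvexPotential φ) {η : ℝ}
    (hη : η ∈ Set.Ioo (0 : ℝ) (1/2)) {R t₀ γ a b : ℝ}
    (hRz : ∀ z, R ≤ z → -(η * deriv φ 0) / 2 ≤ noisyDeriv φ η z)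
    (ht : ∀ z, z < t₀ → noisyDeriv φ η z < (1 - 2 * η) * deriv φ 0 / 2)
    (hγ : 0 < γ) (hγη : γ ≤ η / 6) (hγR : 6 * γ * R ≤ t₀)
    (hmin : ∀ a' b', risk φ η γ a b ≤ risk φ η γ a' b') :
    γ * (a - b) ≤ 0 ∧ 0 < a ∧ 0 < γ * (a + 5 * b) := by
  set g := noisyDeriv φ η with hg
  have hmono : Monotone g := monotone_noisyDeriv hφ hη
  have hℓ := hasDerivAt_noisyLoss hφ η
  have hd : deriv φ 0 < 0 := hφ.deriv_zero_neg
  have hg0 : g 0 = (1 - 2 * η) * deriv φ 0 := by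
    simp only [hg, noisyDeriv, neg_zero]; ring
  have hg0neg : g 0 < 0 := by
    rw [hg0]; nlinarith [mul_pos (show 0 < 1 - 2 * η by linarith [hη.2]) (neg_pos.2 hd)]
  have eqa : g a + 2 * (g (γ * (a - b)) * γ) + g (γ * (a + 5 * b)) * γ = 0 := by
    have i1 : HasDerivAt (fun x => γ * (x - b)) γ a := by
      simpa using ((hasDerivAt_id a).sub_const b).const_mul γ
    have i2 : HasDerivAt (fun x => γ * (x + 5 * b)) γ a := by
      simpa using ((hasDerivAt_id a).add_const (5 * b)).const_mul γ
    have h := ((hℓ a).add (((hℓ _).comp a i1).const_mul 2)).add ((hℓ _).comp a i2)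
    have hm : IsLocalMin (fun x => risk φ η γ x b) a := Eventually.of_forall fun x => hmin x b
    exact hm.hasDerivAt_eq_zero h
  have eqb : 2 * (g (γ * (a - b)) * (-γ)) + g (γ * (a + 5 * b)) * (γ * 5) = 0 := by
    have i1 : HasDerivAt (fun x => γ * (a - x)) (-γ) b := by
      simpa using ((hasDerivAt_id b).const_sub a).const_mul γ
    have i2 : HasDerivAt (fun x => γ * (a + 5 * x)) (γ * 5) b := by
      simpa using (((hasDerivAt_id b).const_mul 5).const_add a).const_mul γ
    have h := ((((hℓ _).comp b i1).const_mul 2).const_add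
      ((1 - η) * φ a + η * φ (-a))).add ((hℓ _).comp b i2)
    have hm : IsLocalMin (fun x => risk φ η γ a x) b := Eventually.of_forall fun x => hmin a x
    exact hm.hasDerivAt_eq_zero h
  have e1 : g (γ * (a + 5 * b)) = 2 / 5 * g (γ * (a - b)) := by
    have : γ * (5 * g (γ * (a + 5 * b)) - 2 * g (γ * (a - b))) = 0 := by linarith
    rcases mul_eq_zero.1 this with h | h
    · exact absurd h hγ.ne'
    · linarith
  have e2 : g a = -(12 / 5) * γ * g (γ * (a - b)) := by
    rw [e1] at eqa; linarith
  have hs : γ * (a - b) ≤ 0 := by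
    by_contra! hs
    have k1 : g 0 ≤ g (γ * (a - b)) := hmono hs.le
    have k2 : t₀ ≤ γ * (a + 5 * b) := by
      by_contra! hlt
      have := ht _ hlt
      rw [← hg0] at this
      linarith
    -- Here `6 γ a = 5 s + t ≥ t₀ ≥ 6 γ R`.
    have k3 : R ≤ a := by
      have : γ * R ≤ γ * a := by linarith
      exact le_of_mul_le_mul_left this hγ
    have k4 := hRz a k3
    have k5 : g a ≤ -(12 / 5) * γ * g 0 := by
      rw [e2]; linarith [mul_le_mul_of_nonneg_left k1 hγ.le]
    have k6 : γ * -g 0 ≤ η / 6 * -deriv φ 0 := by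
      apply mul_le_mul hγη _ (by linarith) (by linarith [hη.1])
      rw [hg0]; nlinarith [hη.1]
    linarith [mul_pos hη.1 (neg_pos.2 hd)]
  have ha : 0 < a := by
    by_contra! ha
    have k1 : g (γ * (a - b)) < 0 := (hmono hs).trans_lt hg0neg
    have k2 : g a ≤ g 0 := hmono ha
    linarith [mul_pos hγ (neg_pos.2 k1)]
  refine ⟨hs, ha, mul_pos hγ ?_⟩
  have : a - b ≤ 0 := by
    by_contra! h
    linarith [mul_pos hγ h]
  linarith

/-- The distribution with mass `1/4` on `p`, `1/2` on `q` and `1/4` on `r`. -/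
noncomputable def threePoint {X : Type*} [MeasurableSpace X] (p q r : X) : Measure X :=
  (4⁻¹ : ℝ≥0∞) • Measure.dirac p + (2⁻¹ : ℝ≥0∞) • Measure.dirac q
    + (4⁻¹ : ℝ≥0∞) • Measure.dirac r

theorem ENNReal_quarter_add : (4⁻¹ : ℝ≥0∞) + 4⁻¹ = 2⁻¹ := by
  rw [← ENNReal.toReal_eq_toReal_iff' (by simp) (by simp), ENNReal.toReal_add (by simp) (by simp)]
  norm_num

theorem threePoint_isProb {X : Type*} [MeasurableSpace X] (p q r : X) :
    IsProbabilityMeasure (threePoint p q r) := by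
  constructor
  simp only [threePoint, Measure.add_apply, Measure.smul_apply, measure_univ, smul_eq_mul, mul_one]
  rw [add_right_comm, ENNReal_quarter_add, ENNReal.inv_two_add_inv_two]

theorem threePoint_noisyRisk {φ : ℝ → ℝ} (hφ : IsConvexPotential φ) {η : ℝ}
    (hη : η ∈ Set.Ioo (0 : ℝ) (1/2)) (γ : ℝ) (v : EuclideanSpace ℝ (Fin 2)) :
    noisyRisk φ η (threePoint (!₂[1, 0], 1) (!₂[γ, -γ], 1) (!₂[γ, 5 * γ], 1)) v
      = ENNReal.ofReal (risk φ η γ (v 0) (v 1) / 4) := by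
  have hnn : ∀ z, 0 ≤ (1 - η) * φ z + η * φ (-z) := fun z =>
    add_nonneg (mul_nonneg (by linarith [hη.2]) (hφ.nonneg _)) (mul_nonneg hη.1.le (hφ.nonneg _))
  have i1 : ⟪v, !₂[(1 : ℝ), 0]⟫ = v 0 := by simp [PiLp.inner_apply]
  have i2 : ⟪v, !₂[γ, -γ]⟫ = γ * (v 0 - v 1) := by simp [PiLp.inner_apply]; ring
  have i3 : ⟪v, !₂[γ, 5 * γ]⟫ = γ * (v 0 + 5 * v 1) := by simp [PiLp.inner_apply]; ring
  have c4 : (4⁻¹ : ℝ≥0∞) = ENNReal.ofReal 4⁻¹ := by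
    rw [ENNReal.ofReal_inv_of_pos (by norm_num)]; norm_num
  have c2 : (2⁻¹ : ℝ≥0∞) = ENNReal.ofReal 2⁻¹ := by
    rw [ENNReal.ofReal_inv_of_pos (by norm_num)]; norm_num
  simp only [noisyRisk, threePoint, lintegral_add_measure, lintegral_smul_measure, lintegral_dirac,
    i1, i2, i3, one_mul, neg_mul, smul_eq_mul]
  rw [c4, c2, ← ENNReal.ofReal_mul (by norm_num), ← ENNReal.ofReal_mul (by norm_num),
    ← ENNReal.ofReal_mul (by norm_num), ← ENNReal.ofReal_add, ← ENNReal.ofReal_add]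
  · congr 1; unfold risk; ring
  all_goals
    have := hnn (v 0)
    have := hnn (γ * (v 0 - v 1))
    have := hnn (γ * (v 0 + 5 * v 1))
    positivity

/-- The Long–Servedio negative result: for every noise rate `η ∈ (0,1/2)` and every convex
potential function `φ`, there is a probability distribution `D` supported on three points of
the closed unit disc in `ℝ²` (with labels in `{-1,1}`) and a margin `γ > 0` such that `D` is
linearly separable with margin `γ`, yet every minimizer of the noisy `φ`-risk over all of `ℝ²`
misclassifies with probability `1/2` under `D`. -/
theorem long_servedio (φ : ℝ → ℝ) (hφ : IsConvexPotential φ)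
    (η : ℝ) (hη : η ∈ Set.Ioo (0 : ℝ) (1/2)) :
    ∃ D : Measure (EuclideanSpace ℝ (Fin 2) × ℝ), IsProbabilityMeasure D ∧
      (∃ s : Finset (EuclideanSpace ℝ (Fin 2) × ℝ), s.card = 3 ∧ D (↑s)ᶜ = 0 ∧
        ∀ p ∈ s, ‖p.1‖ ≤ 1 ∧ (p.2 = 1 ∨ p.2 = -1)) ∧
      ∃ γ : ℝ, 0 < γ ∧
        (∃ w : EuclideanSpace ℝ (Fin 2),
          D {p | p.2 * ⟪w, p.1⟫ / (|w 0| + |w 1|) < γ} = 0) ∧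
        ∀ v : EuclideanSpace ℝ (Fin 2),
          (∀ w : EuclideanSpace ℝ (Fin 2), noisyRisk φ η D v ≤ noisyRisk φ η D w) →
            D {p | p.2 ≠ signR ⟪v, p.1⟫} = 1/2 := by
  classical
  obtain ⟨R, hR, hRz⟩ := exists_noisyDeriv_ge hφ hη
  obtain ⟨t₀, ht₀, ht⟩ := exists_noisyDeriv_lt hφ hη
  obtain ⟨γ, hγ, hγη, hγR⟩ : ∃ γ : ℝ, 0 < γ ∧ γ ≤ η / 6 ∧ 6 * γ * R ≤ t₀ := by
    have hR0 : 0 < R := by linarith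
    have hη0 := hη.1
    refine ⟨min (η / 6) (t₀ / (6 * R)), by positivity, min_le_left _ _, ?_⟩
    have h := min_le_right (η / 6) (t₀ / (6 * R))
    rw [le_div_iff₀ (by positivity)] at h
    linarith
  have hγ1 : γ < 1 / 12 := by linarith [hη.2]
  have i1 : ∀ v : EuclideanSpace ℝ (Fin 2), ⟪v, !₂[(1 : ℝ), 0]⟫ = v 0 := fun v => by
    simp [PiLp.inner_apply]
  have i2 : ∀ v : EuclideanSpace ℝ (Fin 2), ⟪v, !₂[γ, -γ]⟫ = γ * (v 0 - v 1) := fun v => by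
    simp [PiLp.inner_apply]; ring
  have i3 : ∀ v : EuclideanSpace ℝ (Fin 2), ⟪v, !₂[γ, 5 * γ]⟫ = γ * (v 0 + 5 * v 1) := fun v => by
    simp [PiLp.inner_apply]; ring
  refine ⟨threePoint (!₂[1, 0], 1) (!₂[γ, -γ], 1) (!₂[γ, 5 * γ], 1), threePoint_isProb _ _ _,
    ⟨{(!₂[1, 0], 1), (!₂[γ, -γ], 1), (!₂[γ, 5 * γ], 1)}, ?_, ?_, ?_⟩, γ, hγ,
    ⟨!₂[1, 0], ?_⟩, ?_⟩
  · have n1 : (!₂[(1 : ℝ), 0], (1 : ℝ)) ≠ (!₂[γ, -γ], 1) := fun h => by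
      have := congrArg (fun p : EuclideanSpace ℝ (Fin 2) × ℝ => p.1 0) h
      simp at this; linarith
    have n2 : (!₂[(1 : ℝ), 0], (1 : ℝ)) ≠ (!₂[γ, 5 * γ], 1) := fun h => by
      have := congrArg (fun p : EuclideanSpace ℝ (Fin 2) × ℝ => p.1 0) h
      simp at this; linarith
    have n3 : (!₂[γ, -γ], (1 : ℝ)) ≠ (!₂[γ, 5 * γ], 1) := fun h => by
      have := congrArg (fun p : EuclideanSpace ℝ (Fin 2) × ℝ => p.1 1) h
      simp at this; linarith
    exact Finset.card_eq_three.2 ⟨_, _, _, n1, n2, n3, rfl⟩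
  · simp [threePoint]
  · intro p hp
    simp only [Finset.mem_insert, Finset.mem_singleton] at hp
    rcases hp with rfl | rfl | rfl
    all_goals
      refine ⟨?_, Or.inl rfl⟩
      rw [EuclideanSpace.norm_eq, Real.sqrt_le_iff]
      refine ⟨zero_le_one, ?_⟩
      simp
      try nlinarith
  · simp only [threePoint, Measure.add_apply, Measure.smul_apply, Measure.dirac_apply, smul_eq_mul,
      Set.indicator, Set.mem_ofPred_eq, i1, i2, i3]
    simp [not_lt.2 (show γ ≤ 1 by linarith)]
  · intro v hv
    have hmin : ∀ a b, risk φ η γ (v 0) (v 1) ≤ risk φ η γ a b := fun a b => by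
      have h := hv !₂[a, b]
      rw [threePoint_noisyRisk hφ hη, threePoint_noisyRisk hφ hη] at h
      have hnn : 0 ≤ risk φ η γ a b := by
        have : 0 ≤ 1 - η := by linarith [hη.2]
        unfold risk
        have hz : ∀ z, 0 ≤ (1 - η) * φ z + η * φ (-z) := fun z =>
          add_nonneg (mul_nonneg this (hφ.nonneg _)) (mul_nonneg hη.1.le (hφ.nonneg _))
        linarith [hz a, hz (γ * (a - b)), hz (γ * (a + 5 * b))]
      rw [ENNReal.ofReal_le_ofReal_iff (by positivity)] at h
      simp at h
      linarith
    obtain ⟨h1, h2, h3⟩ := minimizer_signs hφ hη hRz ht hγ hγη hγR hmin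
    simp only [threePoint, Measure.add_apply, Measure.smul_apply, Measure.dirac_apply, smul_eq_mul,
      Set.indicator, Set.mem_ofPred_eq, i1, i2, i3, signR, if_pos h2, if_pos h3, if_neg h1.not_gt]
    norm_num
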